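/- Let T be a decision tree for a training set (E, λ) and suppose some decision tree with zero errors on (E, λ) is obtainable from T by a sequence of subtree raising operations. If v is a leaf of T containing an example misclassified by T, then T is not a single leaf, v has a parent w, and some decision tree with zero errors on (E, λ) is obtainable by subtree raising operations from the tree T₁ that results from T by the raising operation at w keeping the child of w other than v. -/

import Mathlib

/-- The two class labels. -/
inductive Label where
  | blue
  | red
deriving DecidableEq

/-- A decision tree over examples `ι → ℝ` with classes `{blue, red}`:
every inner node carries a feature and a threshold, every leaf a class label.
An example goes to the left child if its value in the node's feature is at most
the threshold, and to the right child otherwise. -/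
inductive DTree (ι : Type) where
  | leaf (c : Label)
  | node (feat : ι) (thr : ℝ) (left right : DTree ι)

namespace DTree

variable {ι : Type}

/-- The class that a decision tree assigns to an example. -/
noncomputable def classify : DTree ι → (ι → ℝ) → Label
  | .leaf c, _ => c
  | .node f t l r, e => if e f ≤ t then l.classify e else r.classify e

/-- The routing path of an example (`false` = left child, `true` = right child);
it is the position of the leaf of the example. -/
noncomputable def route : DTree ι → (ι → ℝ) → List Bool
  | .leaf _, _ => []
  | .node f t l r, e => if e f ≤ t then false :: l.route e else true :: r.route e

/-- The subtree rooted at a position (`none` if the position is not a node). -/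
def subtreeAt : DTree ι → List Bool → Option (DTree ι)
  | T, [] => some T
  | .leaf _, _ :: _ => none
  | .node _ _ l r, b :: p => (if b then r else l).subtreeAt p

/-- Replace the subtree at a given position by another tree. -/
def replaceAt : DTree ι → List Bool → DTree ι → DTree ι
  | _, [], T' => T'
  | .leaf c, _ :: _, _ => .leaf c
  | .node f t l r, b :: p, T' =>
      if b then .node f t l (r.replaceAt p T') else .node f t (l.replaceAt p T') r

/-- The number of inner nodes of a decision tree. -/
def innerCount : DTree ι → ℕ
  | .leaf _ => 0
  | .node _ _ l r => 1 + l.innerCount + r.innerCount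

/-- The position `p` is an inner node of `T`. -/
def IsInnerPos (T : DTree ι) (p : List Bool) : Prop :=
  ∃ f t l r, T.subtreeAt p = some (.node f t l r)

/-- The position `p` is a node of `T`. -/
def IsNodePos (T : DTree ι) (p : List Bool) : Prop :=
  (T.subtreeAt p).isSome

/-- The feature and threshold of the inner node at position `p`. -/
def cutAt (T : DTree ι) (p : List Bool) : Option (ι × ℝ) :=
  match T.subtreeAt p with
  | some (.node f t _ _) => some (f, t)
  | _ => none

/-- The subtree raising operation at position `q` keeping the child in direction `b`:
the subtree rooted at `q` is replaced by the subtree rooted at its `b`-child; it prunes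
the node at `q` together with all inner nodes of the subtree rooted at the other child. -/
def raiseAt (T : DTree ι) (q : List Bool) (b : Bool) : DTree ι :=
  match T.subtreeAt q with
  | some (.node _ _ l r) => T.replaceAt q (if b then r else l)
  | _ => T

end DTree

/-- `E[T,p]`: the examples of `E` whose routing through `T` passes the position `p`. -/
noncomputable def reach {ι : Type} (E : Finset (ι → ℝ)) (T : DTree ι) (p : List Bool) :
    Finset (ι → ℝ) :=
  E.filter fun e => p <+: T.route e

/-- The number of errors of `T` on the training set `(E, lab)`. -/
noncomputable def errCount {ι : Type} (T : DTree ι) (E : Finset (ι → ℝ))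
    (lab : (ι → ℝ) → Label) : ℕ :=
  (E.filter fun e => T.classify e ≠ lab e).card

/-- A most frequent label of the labeled set `(E, lab)` (blue in case of a tie). -/
def majorityLabel {ι : Type} (E : Finset (ι → ℝ)) (lab : (ι → ℝ) → Label) : Label :=
  if (E.filter fun e => lab e = Label.red).card ≤ (E.filter fun e => lab e = Label.blue).card
  then Label.blue else Label.red

/-- One subtree replacement operation: some inner node of `T` is replaced by a leaf
labeled with a most frequent label of the examples reaching it. -/
def ReplStep {ι : Type} (E : Finset (ι → ℝ)) (lab : (ι → ℝ) → Label)
    (T T' : DTree ι) : Prop :=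
  ∃ p, T.IsInnerPos p ∧
    T' = T.replaceAt p (.leaf (majorityLabel (reach E T p) lab))

/-- `T` is a reasonable decision tree for `(E, lab)`: every node is reached by some
example and every leaf carries a most frequent label of the examples reaching it. -/
def Reasonable {ι : Type} (E : Finset (ι → ℝ)) (lab : (ι → ℝ) → Label)
    (T : DTree ι) : Prop :=
  (∀ p, T.IsNodePos p → (reach E T p).Nonempty) ∧
  (∀ p c, T.subtreeAt p = some (.leaf c) → ∀ c' : Label,
    ((reach E T p).filter fun e => lab e = c').card ≤
      ((reach E T p).filter fun e => lab e = c).card)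

/-- Apply a sequence of raising operations (given by positions and kept directions). -/
def applySeq {ι : Type} : DTree ι → List (List Bool × Bool) → DTree ι
  | T, [] => T
  | T, (q, b) :: rest => applySeq (T.raiseAt q b) rest

/-- Each raising operation of the sequence is applied at an inner node. -/
def ValidSeq {ι : Type} : DTree ι → List (List Bool × Bool) → Prop
  | _, [] => True
  | T, (q, b) :: rest => T.IsInnerPos q ∧ ValidSeq (T.raiseAt q b) rest

/-- The total number of inner nodes pruned by a sequence of raising operations. -/
def seqPruned {ι : Type} : DTree ι → List (List Bool × Bool) → ℕ
  | _, [] => 0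
  | T, (q, b) :: rest =>
      (match T.subtreeAt q with
        | some (.node _ _ l r) => 1 + DTree.innerCount (if b then l else r)
        | _ => 0) + seqPruned (T.raiseAt q b) rest

/-- `T'` is obtained from `T` by a (possibly empty) sequence of subtree raising
operations. -/
def RaisedFrom {ι : Type} (T T' : DTree ι) : Prop :=
  ∃ steps, ValidSeq T steps ∧ applySeq T steps = T'

/-- `T'` is obtained from `T` by a sequence of subtree raising operations pruning
exactly `m` inner nodes in total. -/
def RaisedFromPruning {ι : Type} (T : DTree ι) (m : ℕ) (T' : DTree ι) : Prop :=
  ∃ steps, ValidSeq T steps ∧ seqPruned T steps = m ∧ applySeq T steps = T'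

/-- Tracking the position of a node through one raising operation: nodes strictly
below the raised node on the discarded side, and the raised node itself, are pruned
(`none`); all other nodes survive at a possibly shifted position. -/
def stepMap (q : List Bool) (b : Bool) (p : List Bool) : Option (List Bool) :=
  if q <+: p then
    if q ++ [b] <+: p then some (q ++ p.drop (q.length + 1)) else none
  else some p

/-- Tracking the position of a node through a sequence of raising operations. -/
def seqMap : List (List Bool × Bool) → List Bool → Option (List Bool)
  | [], p => some p
  | (q, b) :: rest, p => (stepMap q b p).bind (seqMap rest)

/-- The number of errors of `T` on a multiset of labeled examples. -/
noncomputable def errCountM {ι : Type} (T : DTree ι) (E : Multiset ((ι → ℝ) × Label)) : ℕ :=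
  (E.filter fun q => T.classify q.1 ≠ q.2).card

/-!
Raising acts independently on the two subtrees of a node until the node itself is raised, so a
tree obtained from an inner node either keeps its cut over two raised subtrees or is obtained from
one of the two subtrees alone. Follow the route of a misclassified example `e` down `T`, and
compare with the error-free tree `T'`. If at some node `T'` is obtained from the child that `e`
does not enter, then the subtree that `e` enters is irrelevant to `T'`, and pruning a leaf in it
does no harm. Otherwise the leaf of `e` itself would survive in `T'` and be reached by `e`, which
would then still be misclassified.
-/

namespace DTree

open Relation

variable {ι : Type} {f : ι} {t : ℝ} {a b : Bool} {c : Label} {e : ι → ℝ} {p w : List Bool}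
  {S T T' X : DTree ι}

/-- The decision tree with cut `(f, t)` at the root whose child in direction `a` is `T` and whose
other child is `S`. Naming a child by its direction makes left and right interchangeable, so that
mirror-image cases are treated at once. -/
def branch (f : ι) (t : ℝ) : Bool → DTree ι → DTree ι → DTree ι
  | false, T, S => .node f t T S
  | true, T, S => .node f t S T

/-- The direction in which an example leaves an inner node with cut `(f, t)`, encoded as in
`route`: `false` for left, `true` for right. -/
noncomputable def direction (f : ι) (t : ℝ) (e : ι → ℝ) : Bool :=
  decide (t < e f)

theorem branch_not (f : ι) (t : ℝ) (a : Bool) (T S : DTree ι) :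
    branch f t (!a) S T = branch f t a T S := by
  cases a <;> rfl

theorem classify_branch_direction (f : ι) (t : ℝ) (e : ι → ℝ) (T S : DTree ι) :
    (branch f t (direction f t e) T S).classify e = T.classify e := by
  by_cases h : t < e f <;> simp [direction, branch, classify, h, not_le.mpr, not_lt.mp]

theorem route_branch_direction (f : ι) (t : ℝ) (e : ι → ℝ) (T S : DTree ι) :
    (branch f t (direction f t e) T S).route e = direction f t e :: T.route e := by
  by_cases h : t < e f <;> simp [direction, branch, route, h, not_le.mpr, not_lt.mp]

@[elab_as_elim]
theorem route_induction {motive : DTree ι → Prop} (e : ι → ℝ) (T : DTree ι)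
    (leaf : ∀ c, motive (.leaf c))
    (branch : ∀ f t T S, motive T → motive (branch f t (direction f t e) T S)) : motive T := by
  induction T with
  | leaf c => exact leaf c
  | node f t l r ihl ihr =>
    cases h : direction f t e
    · simpa only [h, DTree.branch] using branch f t l r ihl
    · simpa only [h, DTree.branch] using branch f t r l ihr

theorem route_eq_nil_iff : T.route e = [] ↔ ∃ c, T = .leaf c := by
  cases T with
  | leaf c => simp [route]
  | node f t l r => by_cases h : e f ≤ t <;> simp [route, h]

theorem not_isInnerPos_leaf : ¬ (leaf c : DTree ι).IsInnerPos p := by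
  cases p <;> simp [IsInnerPos, subtreeAt]

theorem isInnerPos_branch_nil : (branch f t a T S).IsInnerPos [] := by
  cases a <;> simp [IsInnerPos, subtreeAt, branch]

theorem isInnerPos_branch_cons : (branch f t a T S).IsInnerPos (a :: p) ↔ T.IsInnerPos p := by
  cases a <;> simp [IsInnerPos, subtreeAt, branch]

theorem isInnerPos_of_route_eq_append_cons (h : T.route e = w ++ b :: p) : T.IsInnerPos w := by
  induction T using route_induction e generalizing w with
  | leaf c => simp [route] at h
  | branch f t T S ih =>
    rw [route_branch_direction] at h
    cases w with
    | nil => exact isInnerPos_branch_nil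
    | cons a w =>
      rw [List.cons_append, List.cons.injEq] at h
      obtain ⟨rfl, h⟩ := h
      exact isInnerPos_branch_cons.mpr (ih h)

theorem raiseAt_branch_nil_self : (branch f t a T S).raiseAt [] a = T := by
  cases a <;> rfl

theorem raiseAt_branch_nil_not : (branch f t a T S).raiseAt [] (!a) = S := by
  cases a <;> rfl

theorem raiseAt_branch_cons :
    (branch f t a T S).raiseAt (a :: p) b = branch f t a (T.raiseAt p b) S := by
  cases a <;> simp only [branch, raiseAt, subtreeAt, replaceAt, Bool.false_eq_true, if_true,
    if_false] <;> split <;> simp_all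

/-- `T'` is obtained from `T` by a single subtree raising operation. -/
def RaiseStep (T T' : DTree ι) : Prop :=
  ∃ q b, T.IsInnerPos q ∧ T.raiseAt q b = T'

theorem not_raiseStep_leaf : ¬ RaiseStep (leaf c) T' :=
  fun ⟨_, _, hq, _⟩ => not_isInnerPos_leaf hq

theorem raiseStep_to_child : RaiseStep (branch f t a T S) T :=
  ⟨[], a, isInnerPos_branch_nil, raiseAt_branch_nil_self⟩

theorem raiseStep_to_sibling : RaiseStep (branch f t a T S) S :=
  ⟨[], !a, isInnerPos_branch_nil, raiseAt_branch_nil_not⟩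

theorem RaiseStep.branch_congr_child (h : RaiseStep T T') :
    RaiseStep (branch f t a T S) (branch f t a T' S) := by
  obtain ⟨q, b, hq, rfl⟩ := h
  exact ⟨a :: q, b, isInnerPos_branch_cons.mpr hq, raiseAt_branch_cons⟩

theorem RaiseStep.branch_congr_sibling (h : RaiseStep T T') :
    RaiseStep (branch f t a S T) (branch f t a S T') := by
  simpa only [branch_not] using h.branch_congr_child (f := f) (t := t) (a := !a) (S := S)

theorem RaiseStep.of_branch (h : RaiseStep (branch f t a T S) X) :
    X = T ∨ X = S ∨ (∃ T', RaiseStep T T' ∧ X = branch f t a T' S) ∨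
      ∃ S', RaiseStep S S' ∧ X = branch f t a T S' := by
  obtain ⟨_ | ⟨a', q⟩, b, hq, rfl⟩ := h
  · obtain rfl | rfl := Bool.eq_or_eq_not b a
    · exact .inl raiseAt_branch_nil_self
    · exact .inr (.inl raiseAt_branch_nil_not)
  · obtain rfl | rfl := Bool.eq_or_eq_not a' a
    · exact .inr (.inr (.inl ⟨_, ⟨q, b, isInnerPos_branch_cons.mp hq, rfl⟩, raiseAt_branch_cons⟩))
    · rw [← branch_not] at hq ⊢
      refine .inr (.inr (.inr ⟨_, ⟨q, b, isInnerPos_branch_cons.mp hq, rfl⟩, ?_⟩))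
      rw [raiseAt_branch_cons, branch_not]

theorem raisedFrom_iff_reflTransGen : RaisedFrom T T' ↔ ReflTransGen RaiseStep T T' := by
  constructor
  · rintro ⟨steps, hvalid, rfl⟩
    induction steps generalizing T with
    | nil => exact .refl
    | cons s steps ih => exact .head ⟨s.1, s.2, hvalid.1, rfl⟩ (ih hvalid.2)
  · intro h
    induction h using ReflTransGen.head_induction_on with
    | refl => exact ⟨[], trivial, rfl⟩
    | head hstep _ ih =>
      obtain ⟨q, b, hq, rfl⟩ := hstep
      obtain ⟨steps, hvalid, happly⟩ := ih
      exact ⟨(q, b) :: steps, ⟨hq, hvalid⟩, happly⟩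

theorem raisedFrom_leaf_iff : RaisedFrom (leaf c) X ↔ X = leaf c := by
  rw [raisedFrom_iff_reflTransGen, reflTransGen_iff_eq fun _ => not_raiseStep_leaf]

theorem raisedFrom_branch_iff :
    RaisedFrom (branch f t a T S) X ↔
      (∃ T' S', RaisedFrom T T' ∧ RaisedFrom S S' ∧ X = branch f t a T' S') ∨
        RaisedFrom T X ∨ RaisedFrom S X := by
  simp only [raisedFrom_iff_reflTransGen]
  constructor
  · intro h
    generalize hY : branch f t a T S = Y at h
    induction h using ReflTransGen.head_induction_on generalizing T S with
    | refl => exact .inl ⟨T, S, .refl, .refl, hY.symm⟩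
    | head hstep hrest ih =>
      subst hY
      obtain rfl | rfl | ⟨T₁, hT, rfl⟩ | ⟨S₁, hS, rfl⟩ := hstep.of_branch
      · exact .inr (.inl hrest)
      · exact .inr (.inr hrest)
      · exact (ih rfl).imp (fun ⟨T', S', hT', hS', hX⟩ => ⟨T', S', hT'.head hT, hS', hX⟩)
          (.imp_left (.head hT))
      · exact (ih rfl).imp (fun ⟨T', S', hT', hS', hX⟩ => ⟨T', S', hT', hS'.head hS, hX⟩)
          (.imp_right (.head hS))
  · rintro (⟨T', S', hT, hS, rfl⟩ | hT | hS)
    · exact (hT.lift (branch f t a · S) fun _ _ => RaiseStep.branch_congr_child).trans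
        (hS.lift (branch f t a T' ·) fun _ _ => RaiseStep.branch_congr_sibling)
    · exact .head raiseStep_to_child hT
    · exact .head raiseStep_to_sibling hS

theorem raisedFrom_raiseAt_of_classify_ne (h : RaisedFrom T T')
    (hne : T.classify e ≠ T'.classify e) (hroute : T.route e = w ++ [b]) :
    RaisedFrom (T.raiseAt w (!b)) T' := by
  induction T using route_induction e generalizing w T' with
  | leaf c => simp [route] at hroute
  | branch f t T S ih =>
    rw [classify_branch_direction] at hne
    rw [route_branch_direction] at hroute
    cases w with
    | nil =>
      obtain ⟨rfl, hnil⟩ := List.cons.inj hroute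
      obtain ⟨c, rfl⟩ := route_eq_nil_iff.mp hnil
      rw [raiseAt_branch_nil_not]
      obtain ⟨L, S', hL, -, rfl⟩ | hL | hS := raisedFrom_branch_iff.mp h
      · rw [classify_branch_direction, raisedFrom_leaf_iff.mp hL] at hne
        exact absurd rfl hne
      · rw [raisedFrom_leaf_iff.mp hL] at hne
        exact absurd rfl hne
      · exact hS
    | cons a w =>
      rw [List.cons_append, List.cons.injEq] at hroute
      obtain ⟨rfl, hroute⟩ := hroute
      rw [raiseAt_branch_cons, raisedFrom_branch_iff]
      obtain ⟨L, S', hL, hS, rfl⟩ | hT | hS := raisedFrom_branch_iff.mp h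
      · rw [classify_branch_direction] at hne
        exact .inl ⟨_, S', ih hL hne hroute, hS, rfl⟩
      · exact .inr (.inl (ih hT hne hroute))
      · exact .inr (.inr hS)

theorem ne_leaf_of_classify_ne (h : RaisedFrom T T') (hne : T.classify e ≠ T'.classify e)
    (c : Label) : T ≠ .leaf c := by
  rintro rfl
  exact hne (by rw [raisedFrom_leaf_iff.mp h])

theorem exists_route_eq_concat (hT : ∀ c, T ≠ .leaf c) (e : ι → ℝ) :
    ∃ w b, T.route e = w ++ [b] := by
  refine (List.eq_nil_or_concat' (T.route e)).resolve_left fun hnil => ?_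
  obtain ⟨c, hc⟩ := route_eq_nil_iff.mp hnil
  exact hT c hc

theorem errCount_eq_zero_iff {E : Finset (ι → ℝ)} {lab : (ι → ℝ) → Label} :
    errCount T E lab = 0 ↔ ∀ e ∈ E, T.classify e = lab e := by
  simp only [errCount, Finset.card_eq_zero, Finset.filter_eq_empty_iff, not_not]

end DTree

theorem stmt5_general {ι : Type} (E : Finset (ι → ℝ)) (lab : (ι → ℝ) → Label) (T : DTree ι)
    (hzero : ∃ T', RaisedFrom T T' ∧ errCount T' E lab = 0)
    (e : ι → ℝ) (he : e ∈ E) (hmis : T.classify e ≠ lab e) :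
    (∀ c : Label, T ≠ .leaf c)
    ∧ ∃ (w : List Bool) (b : Bool), T.route e = w ++ [b] ∧ T.IsInnerPos w ∧
        ∃ T', RaisedFrom (T.raiseAt w (!b)) T' ∧ errCount T' E lab = 0 := by
  obtain ⟨T', hT', hzero'⟩ := hzero
  have hne : T.classify e ≠ T'.classify e := by
    rwa [DTree.errCount_eq_zero_iff.mp hzero' e he]
  have hT : ∀ c, T ≠ .leaf c := DTree.ne_leaf_of_classify_ne hT' hne
  obtain ⟨w, b, hw⟩ := DTree.exists_route_eq_concat hT e
  exact ⟨hT, w, b, hw, DTree.isInnerPos_of_route_eq_append_cons hw,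
    T', DTree.raisedFrom_raiseAt_of_classify_ne hT' hne hw, hzero'⟩

/-- Suppose some decision tree with zero errors on `(E, lab)` is
obtainable from `T` by subtree raising operations. If `v` is a leaf of `T`
containing an example misclassified by `T`, then `T` is not a single leaf, `v` has
a parent `w` (so `v = w ++ [b]`), and some decision tree with zero errors on
`(E, lab)` is obtainable by subtree raising operations from the tree resulting
from `T` by the raising operation at `w` keeping the child of `w` other than `v`. -/
theorem stmt5 {d : ℕ} (E : Finset (Fin d → ℝ)) (lab : (Fin d → ℝ) → Label)
    (T : DTree (Fin d))
    (hzero : ∃ T', RaisedFrom T T' ∧ errCount T' E lab = 0)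
    (v : List Bool) (c : Label) (hleaf : T.subtreeAt v = some (.leaf c))
    (e : Fin d → ℝ) (he : e ∈ E) (hroute : T.route e = v)
    (hmis : T.classify e ≠ lab e) :
    (∀ c' : Label, T ≠ .leaf c')
    ∧ ∃ (w : List Bool) (b : Bool), v = w ++ [b] ∧ T.IsInnerPos w ∧
        ∃ T', RaisedFrom (T.raiseAt w (!b)) T' ∧ errCount T' E lab = 0 := by
  subst hroute
  exact stmt5_general E lab T hzero e he hmis
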